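/- arXiv:0806.3572 — 2 statements merged into one kernel-verified Lean document; each statement's English description precedes it below -/
import Mathlib

section
/- Let M be a proper geodesic metric space, let c : [0,∞) → M be a ray, and let p ∈ M. Then there exists a coray c̃ to c with c̃(0) = p. That is, there exist a ray c̃ starting at p, minimal geodesics c_n : [0, L_n] → M with L_n → ∞ and c_n(L_n) in the image of c, such that c_n converges to c̃ uniformly on compact subsets of [0,∞). -/
/-!
Join `p` to the points `c (sₙ)`, `sₙ → ∞`, by minimal geodesics `γₙ` of length `Lₙ → ∞`. For fixed
`t ≥ 0` the points `γₙ t` (with `t ≤ Lₙ`) lie in the compact ball of radius `t` about `p`, so they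
converge along a nonprincipal ultrafilter on `ℕ`; call the limit `c' t`. Passing to the limit in
`dist (γₙ s) (γₙ t) = |s - t|` shows that `c'` is a ray. Since the `γₙ` and `c'` are 1-Lipschitz,
pointwise convergence on a finite grid gives uniform convergence on `[0, T]` along the ultrafilter
(`eventually_uniform_of_pointwise`). Hence for every `k` some `n ≥ k` has `γₙ` within `1 / (k + 1)`
of `c'` on `[0, k]`, and choosing one such `n` for each `k` yields the required sequence. The
ultrafilter replaces the diagonal argument in the Arzelà–Ascoli theorem.
-/

open Filter Topology

/-- A ray in a metric space `M` is a map `c : [0,∞) → M` (here a map `ℝ → M`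
restricted to nonnegative times) with `dist (c s) (c t) = |s - t|` for all
`s, t ≥ 0`. -/
def IsRay {M : Type*} [MetricSpace M] (c : ℝ → M) : Prop :=
  ∀ s t : ℝ, 0 ≤ s → 0 ≤ t → dist (c s) (c t) = |s - t|

/-- `c` is a minimal geodesic on the set `I ⊆ ℝ`:
`dist (c s) (c t) = |s - t|` for all `s, t ∈ I`. -/
def IsMinGeodesicOn {M : Type*} [MetricSpace M] (c : ℝ → M) (I : Set ℝ) : Prop :=
  ∀ s ∈ I, ∀ t ∈ I, dist (c s) (c t) = |s - t|

/-- A metric space is geodesic if every pair of points `x, y` is joined by a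
minimal geodesic `c : [0, dist x y] → M` with `c 0 = x` and `c (dist x y) = y`. -/
def IsGeodesicSpace (M : Type*) [MetricSpace M] : Prop :=
  ∀ x y : M, ∃ c : ℝ → M, c 0 = x ∧ c (dist x y) = y ∧
    IsMinGeodesicOn c (Set.Icc 0 (dist x y))

/-- The maps `cs n : [0, L n] → M` converge to `c' : [0,∞) → M` uniformly on
compact subsets of `[0,∞)`: for every `T > 0`,
`sup_{t ∈ [0, min T (L n)]} dist (cs n t) (c' t) → 0`. -/
def ConvUnifOnCompacts {M : Type*} [MetricSpace M] (L : ℕ → ℝ)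
    (cs : ℕ → ℝ → M) (c' : ℝ → M) : Prop :=
  ∀ T > (0 : ℝ), ∀ ε > (0 : ℝ), ∀ᶠ n in Filter.atTop,
    ∀ t ∈ Set.Icc (0 : ℝ) (min T (L n)), dist (cs n t) (c' t) < ε

/-- Pointwise convergence of minimal geodesics to a ray is uniform on compact intervals, along any
filter: compare with the values at a finite grid of mesh `ε / 3`. -/
lemma eventually_uniform_of_pointwise {M : Type*} [MetricSpace M] {l : Filter ℕ}
    {L : ℕ → ℝ} {γ : ℕ → ℝ → M} {c' : ℝ → M}
    (hL : Tendsto L l atTop) (hγ : ∀ n, IsMinGeodesicOn (γ n) (Set.Icc 0 (L n)))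
    (hc' : IsRay c') (hlim : ∀ t, 0 ≤ t → Tendsto (fun n => γ n t) l (𝓝 (c' t)))
    (T ε : ℝ) (hε : 0 < ε) :
    ∀ᶠ n in l, ∀ t ∈ Set.Icc (0 : ℝ) T, dist (γ n t) (c' t) < ε := by
  have hδ : 0 < ε / 3 := by positivity
  have hgrid : ∀ᶠ n in l, ∀ i ∈ Finset.range (⌊T / (ε / 3)⌋₊ + 1),
      dist (γ n (i * (ε / 3))) (c' (i * (ε / 3))) < ε / 3 := by
    rw [Filter.eventually_all_finset]
    intro i _
    exact Metric.tendsto_nhds.1 (hlim (i * (ε / 3)) (by positivity)) _ hδ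
  filter_upwards [hgrid, hL.eventually_ge_atTop T] with n hn hLn t ht
  obtain ⟨ht0, htT⟩ := ht
  set i := ⌊t / (ε / 3)⌋₊ with hi
  have hi1 : (i : ℝ) * (ε / 3) ≤ t :=
    (le_div_iff₀ hδ).1 (Nat.floor_le (by positivity))
  have hi2 : t < ((i : ℝ) + 1) * (ε / 3) := (div_lt_iff₀ hδ).1 (Nat.lt_floor_add_one _)
  have hi0 : 0 ≤ (i : ℝ) * (ε / 3) := by positivity
  have hmem : i ∈ Finset.range (⌊T / (ε / 3)⌋₊ + 1) :=
    Finset.mem_range.2 (Nat.lt_succ_of_le (Nat.floor_le_floor (by gcongr)))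
  have h1 := hn i hmem
  have h2 := hγ n t ⟨ht0, htT.trans hLn⟩ (i * (ε / 3)) ⟨hi0, by linarith⟩
  have h3 := hc' (i * (ε / 3)) t hi0 ht0
  rw [abs_of_nonneg (by linarith)] at h2
  rw [abs_of_nonpos (by linarith)] at h3
  have h4 := dist_triangle4 (γ n t) (γ n (i * (ε / 3))) (c' (i * (ε / 3))) (c' t)
  linarith

/-- In a proper geodesic metric space, for every ray `c` and every point `p`
there is a coray `c'` to `c` starting at `p`: a ray `c'` with `c' 0 = p`
obtained as the locally uniform limit of minimal geodesics `cs n : [0, L n] → M`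
with `L n → ∞` and endpoints `cs n (L n)` on the image of `c`. -/
theorem exists_coray {M : Type*} [MetricSpace M] [ProperSpace M]
    (hgeo : IsGeodesicSpace M) (c : ℝ → M) (hc : IsRay c) (p : M) :
    ∃ c' : ℝ → M, IsRay c' ∧ c' 0 = p ∧
      ∃ (L : ℕ → ℝ) (cs : ℕ → ℝ → M),
        (∀ n, 0 < L n) ∧
        Filter.Tendsto L Filter.atTop Filter.atTop ∧
        (∀ n, IsMinGeodesicOn (cs n) (Set.Icc 0 (L n))) ∧
        (∀ n, cs n (L n) ∈ c '' Set.Ici (0 : ℝ)) ∧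
        ConvUnifOnCompacts L cs c' := by
  have hex : ∀ n : ℕ, ∃ (L : ℝ) (γ : ℝ → M), (n : ℝ) + 1 ≤ L ∧ γ 0 = p ∧
      0 ≤ L ∧ γ L ∈ c '' Set.Ici (0 : ℝ) ∧ IsMinGeodesicOn γ (Set.Icc 0 L) := by
    intro n
    -- By the triangle inequality `c s` has distance at least `s - dist p (c 0) = n + 1` from `p`.
    have hs : 0 ≤ (n : ℝ) + 1 + dist p (c 0) := by positivity
    obtain ⟨γ, h0, h1, h2⟩ := hgeo p (c (n + 1 + dist p (c 0)))
    refine ⟨_, γ, ?_, h0, dist_nonneg, ⟨_, hs, h1.symm⟩, h2⟩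
    have h3 := hc 0 (n + 1 + dist p (c 0)) le_rfl hs
    rw [zero_sub, abs_neg, abs_of_nonneg hs] at h3
    have h4 := dist_triangle (c 0) p (c (n + 1 + dist p (c 0)))
    rw [dist_comm (c 0) p] at h4
    linarith
  choose L γ hLn hγ0 hL0 hγL hγ using hex
  have hL : Tendsto L atTop atTop :=
    tendsto_atTop_mono (fun n => (by linarith [hLn n] : (n : ℝ) ≤ L n))
      tendsto_natCast_atTop_atTop
  have hle : (hyperfilter ℕ : Filter ℕ) ≤ atTop := Nat.hyperfilter_le_atTop
  have hLU : Tendsto L (hyperfilter ℕ : Filter ℕ) atTop := hL.mono_left hle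
  have hlim : ∀ t : ℝ, ∃ x : M, 0 ≤ t →
      Tendsto (fun n => γ n t) (hyperfilter ℕ : Filter ℕ) (𝓝 x) := by
    intro t
    by_cases ht : 0 ≤ t
    · have hball : ∀ᶠ n in (hyperfilter ℕ : Filter ℕ), γ n t ∈ Metric.closedBall p t := by
        filter_upwards [hLU.eventually_ge_atTop t] with n hn
        have h := hγ n t ⟨ht, hn⟩ 0 ⟨le_rfl, hL0 n⟩
        rw [hγ0, sub_zero, abs_of_nonneg ht] at h
        exact Metric.mem_closedBall.2 h.le
      obtain ⟨x, -, hx⟩ := (isCompact_closedBall p t).ultrafilter_le_nhds'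
        ((hyperfilter ℕ).map fun n => γ n t) hball
      exact ⟨x, fun _ => hx⟩
    · exact ⟨p, fun h => absurd h ht⟩
  choose c' hc' using hlim
  have hray : IsRay c' := by
    intro s t hs ht
    refine tendsto_nhds_unique ((hc' s hs).dist (hc' t ht)) (tendsto_const_nhds.congr' ?_)
    filter_upwards [hLU.eventually_ge_atTop s, hLU.eventually_ge_atTop t] with n hns hnt
    exact (hγ n s ⟨hs, hns⟩ t ⟨ht, hnt⟩).symm
  have hc0 : c' 0 = p :=
    tendsto_nhds_unique (hc' 0 le_rfl) (by simp only [hγ0]; exact tendsto_const_nhds)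
  have hsub : ∀ k : ℕ, ∃ n : ℕ, k ≤ n ∧
      ∀ t ∈ Set.Icc (0 : ℝ) k, dist (γ n t) (c' t) < 1 / ((k : ℝ) + 1) := fun k =>
    (((eventually_ge_atTop k).filter_mono hle).and
      (eventually_uniform_of_pointwise hLU hγ hray hc' k _ (by positivity))).exists
  choose φ hφ hφd using hsub
  have hφt : Tendsto φ atTop atTop := tendsto_atTop_mono hφ tendsto_id
  refine ⟨c', hray, hc0, fun k => L (φ k), fun k => γ (φ k), fun k => ?_, hL.comp hφt,
    fun k => hγ _, fun k => hγL _, ?_⟩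
  · exact lt_of_lt_of_le (by positivity) (hLn (φ k))
  · intro T _ ε hε
    filter_upwards [tendsto_natCast_atTop_atTop.eventually_ge_atTop T,
      (tendsto_one_div_add_atTop_nhds_zero_nat (𝕜 := ℝ)).eventually_lt_const hε] with k hkT hkε t ht
    exact (hφd k t ⟨ht.1, ht.2.trans ((min_le_left _ _).trans hkT)⟩).trans hkε
end

section
/- Let n ≥ 1 and consider the flat torus T = ℝⁿ/ℤⁿ with quotient map π : ℝⁿ → T. Fix x̃, ỹ ∈ ℝⁿ with π(x̃) ≠ π(ỹ), and set x = π(x̃), y = π(ỹ). The geodesics from x to y are the paths γ_k : [0,1] → T, γ_k(t) = π(x̃ + t·(ỹ + k − x̃)) for k ∈ ℤⁿ. Then the set B = { π((x̃ + ỹ + k)/2) : k ∈ ℤⁿ } of midpoints has at most 2ⁿ elements, is disjoint from {x, y}, and every geodesic γ_k passes through a point of B (namely γ_k(1/2) ∈ B). Hence B is a finite blocking set for x and y, so the pair x, y is secure in the flat torus. -/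
/-!
Modulo `ℤⁿ`, the midpoint `(x̃ + ỹ + k)/2` depends only on the parities of the coordinates of `k`,
so there are at most `2ⁿ` midpoints (`midpointSet_subset_range`). If a midpoint coincided with
`π x̃` or `π ỹ`, doubling the difference would give `ỹ - x̃ ∈ ℤⁿ`, i.e. `π x̃ = π ỹ`.
-/

/-- The integer lattice `ℤⁿ` as an additive subgroup of `ℝⁿ = Fin n → ℝ`. -/
def intLattice (n : ℕ) : AddSubgroup (Fin n → ℝ) where
  carrier := {v | ∀ i, ∃ m : ℤ, v i = (m : ℝ)}
  zero_mem' := fun i => ⟨0, by simp⟩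
  add_mem' := by
    intro a b ha hb i
    obtain ⟨ma, hma⟩ := ha i
    obtain ⟨mb, hmb⟩ := hb i
    exact ⟨ma + mb, by simp [hma, hmb]⟩
  neg_mem' := by
    intro a ha i
    obtain ⟨m, hm⟩ := ha i
    exact ⟨-m, by simp [hm]⟩

/-- The flat torus `ℝⁿ/ℤⁿ`. -/
abbrev FlatTorus (n : ℕ) := (Fin n → ℝ) ⧸ intLattice n

/-- The quotient map `π : ℝⁿ → ℝⁿ/ℤⁿ`. -/
abbrev torusProj (n : ℕ) : (Fin n → ℝ) →+ FlatTorus n :=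
  QuotientAddGroup.mk' (intLattice n)

/-- For lifts `x̃, ỹ ∈ ℝⁿ` and `k ∈ ℤⁿ`, the geodesic
`γ_k(t) = π (x̃ + t (ỹ + k - x̃))` from `π x̃` to `π ỹ` in the flat torus. -/
def torusGeodesic (n : ℕ) (xl yl : Fin n → ℝ) (k : Fin n → ℤ) (t : ℝ) :
    FlatTorus n :=
  torusProj n (xl + t • (yl + (fun i => (k i : ℝ)) - xl))

/-- The set of midpoints `π ((x̃ + ỹ + k)/2)`, `k ∈ ℤⁿ`. -/
def midpointSet (n : ℕ) (xl yl : Fin n → ℝ) : Set (FlatTorus n) :=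
  {b | ∃ k : Fin n → ℤ, b = torusProj n ((2 : ℝ)⁻¹ • (xl + yl + fun i => (k i : ℝ)))}

theorem torusProj_eq_iff (n : ℕ) (u v : Fin n → ℝ) :
    torusProj n u = torusProj n v ↔ ∀ i, ∃ m : ℤ, v i - u i = (m : ℝ) := by
  rw [QuotientAddGroup.mk'_apply, QuotientAddGroup.mk'_apply, QuotientAddGroup.eq]
  change (∀ i, ∃ m : ℤ, (-u + v) i = (m : ℝ)) ↔ _
  simp only [Pi.add_apply, Pi.neg_apply, neg_add_eq_sub]

/-- Every midpoint is already obtained from some `k ∈ {0, 1}ⁿ`. -/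
theorem midpointSet_subset_range (n : ℕ) (xl yl : Fin n → ℝ) :
    midpointSet n xl yl ⊆ Set.range fun e : Fin n → Fin 2 =>
      torusProj n ((2 : ℝ)⁻¹ • (xl + yl + fun i => ((e i : ℕ) : ℝ))) := by
  rintro b ⟨k, rfl⟩
  refine ⟨fun i => ⟨(k i % 2).toNat, by lia⟩, (torusProj_eq_iff n _ _).2 fun i => ⟨k i / 2, ?_⟩⟩
  have hk : (((k i % 2).toNat : ℕ) : ℤ) + 2 * (k i / 2) = k i := by lia
  have hk' : (((k i % 2).toNat : ℕ) : ℝ) + 2 * ((k i / 2 : ℤ) : ℝ) = (k i : ℝ) := by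
    exact_mod_cast hk
  simp only [Pi.smul_apply, Pi.add_apply, smul_eq_mul]
  linarith

/-- In the flat torus `T = ℝⁿ/ℤⁿ`, given lifts `x̃, ỹ` of two distinct points
`x = π x̃` and `y = π ỹ`, the set `B` of midpoints `π ((x̃ + ỹ + k)/2)`,
`k ∈ ℤⁿ`, has at most `2ⁿ` elements, avoids `x` and `y`, and every geodesic
`γ_k(t) = π (x̃ + t (ỹ + k - x̃))` from `x` to `y` passes through a point of
`B` (namely `γ_k(1/2) ∈ B`). Hence `B` is a finite blocking set for `x, y`,
so the pair `x, y` is secure in the flat torus. -/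
theorem flat_torus_pair_secure (n : ℕ) (hn : 1 ≤ n) (xl yl : Fin n → ℝ)
    (hxy : torusProj n xl ≠ torusProj n yl) :
    (midpointSet n xl yl).Finite ∧
    Nat.card (midpointSet n xl yl) ≤ 2 ^ n ∧
    torusProj n xl ∉ midpointSet n xl yl ∧
    torusProj n yl ∉ midpointSet n xl yl ∧
    (∀ k : Fin n → ℤ, torusGeodesic n xl yl k (2 : ℝ)⁻¹ ∈ midpointSet n xl yl) := by
  have hsub := midpointSet_subset_range n xl yl
  have hfin := Set.finite_range fun e : Fin n → Fin 2 =>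
    torusProj n ((2 : ℝ)⁻¹ • (xl + yl + fun i => ((e i : ℕ) : ℝ)))
  refine ⟨hfin.subset hsub, ?_, ?_, ?_, ?_⟩
  · refine (Nat.card_mono hfin hsub).trans ((Finite.card_range_le _).trans ?_)
    simp
  · rintro ⟨k, hk⟩
    refine hxy ((torusProj_eq_iff n _ _).2 fun i => ?_)
    obtain ⟨m, hm⟩ := (torusProj_eq_iff n _ _).1 hk i
    simp only [Pi.smul_apply, Pi.add_apply, smul_eq_mul] at hm
    -- `(x̃ + ỹ + k)/2 - x̃ = m` gives `ỹ - x̃ = 2m - k`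
    refine ⟨2 * m - k i, ?_⟩
    push_cast
    linarith
  · rintro ⟨k, hk⟩
    refine hxy ((torusProj_eq_iff n _ _).2 fun i => ?_)
    obtain ⟨m, hm⟩ := (torusProj_eq_iff n _ _).1 hk i
    simp only [Pi.smul_apply, Pi.add_apply, smul_eq_mul] at hm
    -- `(x̃ + ỹ + k)/2 - ỹ = m` gives `ỹ - x̃ = k - 2m`
    refine ⟨k i - 2 * m, ?_⟩
    push_cast
    linarith
  · intro k
    refine ⟨k, congrArg (torusProj n) (funext fun i => ?_)⟩
    simp only [Pi.smul_apply, Pi.add_apply, Pi.sub_apply, smul_eq_mul]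
    ring
end
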